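/- Let λ ∈ ℤ_p and let ℓ be a positive integer. Then the vector I^ℓ(z,λ) satisfies the KZ equations modulo p^s: (i) for all i ≠ j in {1,…,2g+1}, (z_i−z_j)·(∂I^ℓ_j/∂z_i)(z,λ) ≡ (1/2)·(I^ℓ_i(z,λ) − I^ℓ_j(z,λ)) (mod p^s) as polynomials in z over ℤ_p; and (ii) for each i, ∏_{j≠i}(z_i−z_j)·(∂I^ℓ_i/∂z_i)(z,λ) ≡ pλ·∏_{j≠i}(z_i−z_j)·I^ℓ_i(z,λ) − (1/2)·Σ_{j≠i} ∏_{k≠i,j}(z_i−z_k)·(I^ℓ_i(z,λ) − I^ℓ_j(z,λ)) (mod p^s) as polynomials in z over ℤ_p. Here 1/2 denotes the inverse of 2 in ℤ_p. -/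

import Mathlib

open MvPolynomial

/-- The truncation order `d(s) = ⌊s(p−1)/(p−2)⌋ + 1`. -/
def dTrunc (p s : ℕ) : ℕ := s * (p - 1) / (p - 2) + 1

/-- `E_s(pλt)` as a polynomial in `t` over `ℚ_p[z₁,…,z_{2g+1}]`, for a fixed `λ ∈ ℤ_p`. -/
noncomputable def EsP (p : ℕ) [Fact p.Prime] (s g : ℕ) (lam : ℤ_[p]) :
    Polynomial (MvPolynomial (Fin (2 * g + 1)) ℚ_[p]) :=
  ∑ k ∈ Finset.range (dTrunc p s + 1),
    Polynomial.C (MvPolynomial.C ((p : ℚ_[p]) ^ k * (lam : ℚ_[p]) ^ k / (k.factorial : ℚ_[p]))) *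
      Polynomial.X ^ k

/-- The `i`-th component `Ψ_{s,i}(t,z,λ) = E_s(pλt)·Φ_s^o(t,z)/(t−z_i)`, where
`Φ_s^o(t,z) = ∏_{j=1}^{2g+1}(t−z_j)^{(p^s−1)/2}`, as a polynomial in `t` over
`ℚ_p[z₁,…,z_{2g+1}]`. -/
noncomputable def PsiComp (p : ℕ) [Fact p.Prime] (s g : ℕ) (lam : ℤ_[p])
    (i : Fin (2 * g + 1)) : Polynomial (MvPolynomial (Fin (2 * g + 1)) ℚ_[p]) :=
  EsP p s g lam *
    (Polynomial.X - Polynomial.C (X i)) ^ ((p ^ s - 1) / 2 - 1) *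
    ∏ j ∈ Finset.univ.erase i, (Polynomial.X - Polynomial.C (X j)) ^ ((p ^ s - 1) / 2)

/-- `I^ℓ_i(z,λ)`: the coefficient of `t^{ℓp^s−1}` in `Ψ_{s,i}(t,z,λ)`. -/
noncomputable def Isol (p : ℕ) [Fact p.Prime] (s g : ℕ) (lam : ℤ_[p]) (l : ℕ)
    (i : Fin (2 * g + 1)) : MvPolynomial (Fin (2 * g + 1)) ℚ_[p] :=
  (PsiComp p s g lam i).coeff (l * p ^ s - 1)

/-!
Write `Ψ = E(t) ∏_j (t - z_j)^{m_j}` and `Ψ_i = Ψ / (t - z_i)`. Both `∂Ψ_j/∂z_i` and `Ψ_i - Ψ_j`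
are multiples of `Ψ / ((t - z_i)(t - z_j))`, which gives the exact equation
`(z_i - z_j) ∂Ψ_j/∂z_i = -m_i (Ψ_i - Ψ_j)`; for `m_i = (p^s - 1)/2` one has `-m_i ≡ 1/2`
modulo `p^s`.

The remaining derivative `∂Ψ_i/∂z_i` comes from the invariance of `∏_j (t - z_j)^{m_j}` under a
simultaneous translation of `t` and the `z_j`: the partial derivatives of `Ψ_i` in `t` and all the
`z_j` sum to `(E'/E) Ψ_i`. The `t`-derivative multiplies the coefficient of `t^{ℓp^s}` by
`ℓp^s ≡ 0`, and for the truncated exponential `E' - pλE = -pλ (pλt)^d / d!` with `d = d(s)`, which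
vanishes modulo `p^s` because Legendre's formula bounds the `p`-adic valuation of `d!` by `d - s`.
-/

section CoefficientwiseDerivative

variable {R σ : Type*} [CommRing R]

/-- Partial differentiation `∂/∂z_i`, acting on the coefficients of a polynomial in `t`. -/
noncomputable def pderivCoeffs (i : σ) :
    Derivation R (Polynomial (MvPolynomial σ R)) (Polynomial (MvPolynomial σ R)) :=
  PolynomialModule.equivPolynomialSelf.compDer (pderiv i).mapCoeffs

lemma coeff_pderivCoeffs (i : σ) (P : Polynomial (MvPolynomial σ R)) (n : ℕ) :
    (pderivCoeffs i P).coeff n = pderiv i (P.coeff n) := rfl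

lemma pderivCoeffs_map_C (i : σ) (E : Polynomial R) : pderivCoeffs i (E.map C) = 0 := by
  ext1 n
  simp [coeff_pderivCoeffs]

lemma pderivCoeffs_X_sub_C_X [DecidableEq σ] (i j : σ) :
    pderivCoeffs i (Polynomial.X - Polynomial.C (X j : MvPolynomial σ R)) =
      if i = j then -1 else 0 := by
  ext1 n
  rw [coeff_pderivCoeffs, Polynomial.coeff_sub, Polynomial.coeff_X, Polynomial.coeff_C]
  split_ifs <;> simp_all [Polynomial.coeff_one, pderiv_X, eq_comm]

lemma pderivCoeffs_prod_of_notMem {i : σ} {A : Finset σ} (hi : i ∉ A) (m : σ → ℕ) :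
    pderivCoeffs i
      (∏ j ∈ A, (Polynomial.X - Polynomial.C (X j : MvPolynomial σ R)) ^ m j) = 0 := by
  classical
  refine Finset.prod_induction _ (fun P ↦ pderivCoeffs i P = 0)
    (fun P Q hP hQ ↦ by simp [hP, hQ]) (by simp) fun j hj ↦ ?_
  rw [Derivation.leibniz_pow, pderivCoeffs_X_sub_C_X, if_neg (by rintro rfl; exact hi hj)]
  simp

end CoefficientwiseDerivative

section MasterPolynomial

variable {R σ : Type*} [CommRing R] [Fintype σ]

/-- The master polynomial `E(t) ∏_j (t - z_j)^{m_j}`, as a polynomial in `t` over `R[z]`. -/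
noncomputable def masterPolynomial (E : Polynomial R) (m : σ → ℕ) :
    Polynomial (MvPolynomial σ R) :=
  E.map C * ∏ j, (Polynomial.X - Polynomial.C (X j)) ^ m j

variable (E : Polynomial R) (m : σ → ℕ)

lemma masterPolynomial_sub_C_mul (F : Polynomial R) (a : R) :
    masterPolynomial (F - Polynomial.C a * E) m =
      masterPolynomial F m - Polynomial.C (C a) * masterPolynomial E m := by
  simp only [masterPolynomial, Polynomial.map_sub, Polynomial.map_mul, Polynomial.map_C]
  ring

variable {E m} in
lemma C_dvd_coeff_masterPolynomial {q : R} (h : Polynomial.C q ∣ E) (n : ℕ) :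
    C q ∣ (masterPolynomial E m).coeff n := by
  refine Polynomial.C_dvd_iff_dvd_coeff _ _ |>.mp (Dvd.dvd.mul_right ?_ _) n
  simpa using Polynomial.map_dvd (C : R →+* MvPolynomial σ R) h

lemma masterPolynomial_map {S : Type*} [CommRing S] (f : R →+* S) :
    masterPolynomial (E.map f) m = (masterPolynomial E m).map (MvPolynomial.map f) := by
  simp [masterPolynomial, Polynomial.map_prod, Polynomial.map_map, MvPolynomial.map_comp_C]

section DecidableEq

variable [DecidableEq σ]

/-- The `i`-th component of the polynomial hypergeometric solution: the coefficient of `t^n` in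
`E(t) ∏_j (t - z_j)^{m_j} / (t - z_i)`. The division is encoded by lowering the exponent `m_i`, so
it is meaningful only for `m_i ≠ 0`. -/
noncomputable def hypergeometricSolution (n : ℕ) (i : σ) : MvPolynomial σ R :=
  (masterPolynomial E (m - Pi.single i 1)).coeff n

lemma hypergeometricSolution_map {S : Type*} [CommRing S] (f : R →+* S) (n : ℕ) (i : σ) :
    hypergeometricSolution (E.map f) m n i =
      MvPolynomial.map f (hypergeometricSolution E m n i) := by
  rw [hypergeometricSolution, masterPolynomial_map, Polynomial.coeff_map, hypergeometricSolution]

lemma masterPolynomial_eq_mul_prod_erase (i : σ) :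
    masterPolynomial E m = E.map C * ((Polynomial.X - Polynomial.C (X i)) ^ m i *
      ∏ j ∈ Finset.univ.erase i, (Polynomial.X - Polynomial.C (X j)) ^ m j) := by
  rw [masterPolynomial, ← Finset.mul_prod_erase _ _ (Finset.mem_univ i)]

lemma masterPolynomial_sub_single (i : σ) :
    masterPolynomial E (m - Pi.single i 1) =
      E.map C * ((Polynomial.X - Polynomial.C (X i)) ^ (m i - 1) *
        ∏ j ∈ Finset.univ.erase i, (Polynomial.X - Polynomial.C (X j)) ^ m j) := by
  rw [masterPolynomial_eq_mul_prod_erase _ _ i]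
  congr 2
  · simp
  · refine Finset.prod_congr rfl fun j hj ↦ ?_
    simp [Finset.ne_of_mem_erase hj]

lemma X_sub_C_X_mul_masterPolynomial_sub_single {i : σ} (hi : m i ≠ 0) :
    (Polynomial.X - Polynomial.C (X i)) * masterPolynomial E (m - Pi.single i 1) =
      masterPolynomial E m := by
  rw [masterPolynomial_sub_single, masterPolynomial_eq_mul_prod_erase _ _ i,
    ← mul_pow_sub_one hi (Polynomial.X - Polynomial.C (X i))]
  ring

lemma pderivCoeffs_masterPolynomial (i : σ) :
    pderivCoeffs i (masterPolynomial E m) =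
      -((m i : Polynomial (MvPolynomial σ R)) * masterPolynomial E (m - Pi.single i 1)) := by
  rw [masterPolynomial_sub_single, masterPolynomial_eq_mul_prod_erase _ _ i,
    Derivation.leibniz, pderivCoeffs_map_C, Derivation.leibniz,
    pderivCoeffs_prod_of_notMem (Finset.notMem_erase i _), Derivation.leibniz_pow,
    pderivCoeffs_X_sub_C_X, if_pos rfl]
  simp only [smul_eq_mul, nsmul_eq_mul, mul_zero, add_zero, zero_add]
  ring

lemma derivative_masterPolynomial :
    Polynomial.derivative (masterPolynomial E m) =
      masterPolynomial (Polynomial.derivative E) m +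
        ∑ i, (m i : Polynomial (MvPolynomial σ R)) * masterPolynomial E (m - Pi.single i 1) := by
  rw [masterPolynomial, Polynomial.derivative_mul, Polynomial.derivative_map,
    Polynomial.derivative_prod_finset, Finset.mul_sum, masterPolynomial]
  refine congrArg (masterPolynomial _ m + ·) (Finset.sum_congr rfl fun i _ ↦ ?_)
  rw [masterPolynomial_sub_single, Polynomial.derivative_X_sub_C_pow, map_natCast]
  ring

end DecidableEq

lemma sum_pderivCoeffs_masterPolynomial :
    ∑ i, pderivCoeffs i (masterPolynomial E m) =
      masterPolynomial (Polynomial.derivative E) m -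
        Polynomial.derivative (masterPolynomial E m) := by
  classical
  simp only [derivative_masterPolynomial, pderivCoeffs_masterPolynomial, Finset.sum_neg_distrib]
  ring

end MasterPolynomial

section KZ

variable {R σ : Type*} [CommRing R] [Fintype σ] [DecidableEq σ] {E : Polynomial R} {m : σ → ℕ}

lemma X_sub_X_mul_pderiv_hypergeometricSolution (n : ℕ) {i j : σ} (hij : i ≠ j)
    (hi : m i ≠ 0) (hj : m j ≠ 0) :
    (X i - X j) * pderiv i (hypergeometricSolution E m n j) =
      -((m i : MvPolynomial σ R) *
        (hypergeometricSolution E m n i - hypergeometricSolution E m n j)) := by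
  have hΨi := X_sub_C_X_mul_masterPolynomial_sub_single E (m - Pi.single i 1) (i := j)
    (by simpa [hij.symm] using hj)
  have hΨj := X_sub_C_X_mul_masterPolynomial_sub_single E (m - Pi.single j 1) (i := i)
    (by simpa [hij] using hi)
  have hderiv := pderivCoeffs_masterPolynomial E (m - Pi.single j 1) i
  rw [tsub_right_comm] at hΨi
  have hmi : (m - Pi.single j (1 : ℕ) : σ → ℕ) i = m i := by simp [hij]
  have key : Polynomial.C (X i - X j) * pderivCoeffs i (masterPolynomial E (m - Pi.single j 1)) =
      Polynomial.C (-(m i : MvPolynomial σ R)) *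
        (masterPolynomial E (m - Pi.single i 1) - masterPolynomial E (m - Pi.single j 1)) := by
    rw [hderiv, hmi, ← hΨi, ← hΨj]
    simp only [map_sub, map_neg, map_natCast]
    ring
  have hcoeff := congrArg (Polynomial.coeff · n) key
  simp only [Polynomial.coeff_C_mul, Polynomial.coeff_sub, coeff_pderivCoeffs] at hcoeff
  rw [← neg_mul]
  exact hcoeff

lemma sum_pderiv_hypergeometricSolution (n : ℕ) (i : σ) :
    ∑ j, pderiv j (hypergeometricSolution E m n i) =
      hypergeometricSolution (Polynomial.derivative E) m n i -
        hypergeometricSolution E m (n + 1) i * (n + 1) := by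
  have h := congrArg (Polynomial.coeff · n)
    (sum_pderivCoeffs_masterPolynomial E (m - Pi.single i 1))
  simpa only [hypergeometricSolution, Polynomial.finsetSum_coeff, coeff_pderivCoeffs,
    Polynomial.coeff_sub, Polynomial.coeff_derivative] using h

variable {q : R} {κ : σ → R}

theorem C_dvd_kz_pderiv_ne (hm : ∀ i, m i ≠ 0) (hκ : ∀ i, q ∣ κ i + m i) (n : ℕ)
    {i j : σ} (hij : i ≠ j) :
    C q ∣ (X i - X j) * pderiv i (hypergeometricSolution E m n j) -
      C (κ i) * (hypergeometricSolution E m n i - hypergeometricSolution E m n j) := by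
  have hC : C q ∣ (C (κ i) + (m i : MvPolynomial σ R)) := by
    simpa using map_dvd (C : R →+* MvPolynomial σ R) (hκ i)
  rw [X_sub_X_mul_pderiv_hypergeometricSolution n hij (hm i) (hm j)]
  convert hC.mul_right
    (hypergeometricSolution E m n j - hypergeometricSolution E m n i) using 1
  ring

lemma C_dvd_sum_pderiv_sub {a : R}
    (hE : Polynomial.C q ∣ Polynomial.derivative E - Polynomial.C a * E)
    {n : ℕ} (hn : q ∣ n + 1) (i : σ) :
    C q ∣ ∑ j, pderiv j (hypergeometricSolution E m n i) -
      C a * hypergeometricSolution E m n i := by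
  have hC : C q ∣ ((n : MvPolynomial σ R) + 1) := by
    simpa using map_dvd (C : R →+* MvPolynomial σ R) hn
  have hcoeff := C_dvd_coeff_masterPolynomial (m := m - Pi.single i 1) hE n
  rw [masterPolynomial_sub_C_mul, Polynomial.coeff_sub, Polynomial.coeff_C_mul] at hcoeff
  rw [sum_pderiv_hypergeometricSolution, sub_right_comm]
  exact dvd_sub hcoeff (hC.mul_left _)

theorem C_dvd_kz_pderiv_self (hm : ∀ i, m i ≠ 0) (hκ : ∀ i, q ∣ κ i + m i) {a : R}
    (hE : Polynomial.C q ∣ Polynomial.derivative E - Polynomial.C a * E)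
    {n : ℕ} (hn : q ∣ n + 1) (i : σ) :
    C q ∣ (∏ j ∈ Finset.univ.erase i, (X i - X j)) *
        pderiv i (hypergeometricSolution E m n i) -
      (C a * (∏ j ∈ Finset.univ.erase i, (X i - X j)) * hypergeometricSolution E m n i -
        ∑ j ∈ Finset.univ.erase i, C (κ j) *
          ((∏ k ∈ (Finset.univ.erase i).erase j, (X i - X k)) *
            (hypergeometricSolution E m n i - hypergeometricSolution E m n j))) := by
  have hsum := C_dvd_sum_pderiv_sub (m := m) hE hn i
  rw [← Finset.add_sum_erase _ _ (Finset.mem_univ i)] at hsum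
  have hne : C q ∣ (∏ j ∈ Finset.univ.erase i, (X i - X j)) *
        ∑ j ∈ Finset.univ.erase i, pderiv j (hypergeometricSolution E m n i) -
      ∑ j ∈ Finset.univ.erase i, C (κ j) *
        ((∏ k ∈ (Finset.univ.erase i).erase j, (X i - X k)) *
          (hypergeometricSolution E m n i - hypergeometricSolution E m n j)) := by
    rw [Finset.mul_sum, ← Finset.sum_sub_distrib]
    refine Finset.dvd_sum fun j hj ↦ ?_
    rw [← Finset.mul_prod_erase _ _ hj]
    convert (C_dvd_kz_pderiv_ne (E := E) hm hκ n (Finset.ne_of_mem_erase hj)).mul_left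
      (-∏ k ∈ (Finset.univ.erase i).erase j, (X i - X k)) using 1
    ring
  convert dvd_sub (hsum.mul_left (∏ j ∈ Finset.univ.erase i, (X i - X j))) hne using 1
  ring

end KZ

section TruncatedExponential

lemma derivative_dividedPowers_exp {A : Type*} [CommRing A] {I : Ideal A} (hI : DividedPowers I)
    {a : A} (ha : a ∈ I) :
    PowerSeries.derivative A (hI.exp a) = PowerSeries.C a * hI.exp a := by
  ext n
  rw [PowerSeries.coeff_derivative, PowerSeries.coeff_C_mul]
  simpa [DividedPowers.exp, hI.dpow_one ha, mul_comm, add_comm] using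
    (hI.mul_dpow (m := 1) (n := n) ha).symm

lemma derivative_trunc_dividedPowers_exp {A : Type*} [CommRing A] {I : Ideal A}
    (hI : DividedPowers I) {a : A} (ha : a ∈ I) (d : ℕ) :
    Polynomial.derivative ((hI.exp a).trunc (d + 1)) -
        Polynomial.C a * (hI.exp a).trunc (d + 1) =
      -(Polynomial.C (hI.dpow d a) * (Polynomial.C a * Polynomial.X ^ d)) := by
  rw [← PowerSeries.trunc_derivative, derivative_dividedPowers_exp hI ha, PowerSeries.trunc_succ,
    PowerSeries.trunc_C_mul, ← Polynomial.C_mul_X_pow_eq_monomial]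
  simp only [DividedPowers.exp, PowerSeries.coeff_mk]
  ring

variable {p : ℕ} [Fact p.Prime]

lemma coe_dpow_p_mul (lam : ℤ_[p]) (k : ℕ) :
    ((PadicInt.dividedPowers p).dpow k (p * lam) : ℚ_[p]) =
      (p : ℚ_[p]) ^ k * (lam : ℚ_[p]) ^ k / (k.factorial : ℚ_[p]) := by
  rw [PadicInt.coe_dpow_eq, dif_pos (Ideal.mul_mem_right _ _ (Ideal.mem_span_singleton_self _))]
  simp [mul_pow, div_eq_inv_mul]

lemma add_padicValNat_factorial_le {s d : ℕ} (h : s * (p - 1) < d * (p - 2)) :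
    s + padicValNat p d.factorial ≤ d := by
  have hd : d ≠ 0 := by rintro rfl; simp at h
  have hlegendre := sub_one_mul_padicValNat_factorial_lt_of_ne_zero p hd
  obtain ⟨r, rfl⟩ : ∃ r, p = r + 2 := ⟨p - 2, by have := (Fact.out : p.Prime).two_le; omega⟩
  simp only [Nat.add_sub_cancel, show r + 2 - 1 = r + 1 by omega] at h hlegendre
  refine (Nat.lt_of_mul_lt_mul_left (a := r + 1) ?_).le
  linarith

lemma p_pow_dvd_dpow {s d : ℕ} (h : s * (p - 1) < d * (p - 2)) {x : ℤ_[p]}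
    (hx : x ∈ Ideal.span {(p : ℤ_[p])}) :
    (p : ℤ_[p]) ^ s ∣ (PadicInt.dividedPowers p).dpow d x := by
  have hd : d ≠ 0 := by rintro rfl; simp at h
  rcases eq_or_ne ((PadicInt.dividedPowers p).dpow d x) 0 with h0 | hdpow
  · simp [h0]
  have hx0 : x ≠ 0 := by
    rintro rfl
    exact hdpow (DividedPowers.dpow_eval_zero _ hd)
  have hxval : 1 ≤ x.valuation :=
    (PadicInt.mem_span_pow_iff_le_valuation x hx0 1).1 (by simpa using hx)
  have hfact : ((d.factorial : ℕ) : ℤ_[p]).valuation = padicValNat p d.factorial := by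
    zify
    simp [← PadicInt.valuation_coe]
  have hval := congrArg PadicInt.valuation
    ((PadicInt.dividedPowers p).factorial_mul_dpow_eq_pow (n := d) hx)
  rw [PadicInt.valuation_mul (by exact_mod_cast d.factorial_ne_zero) hdpow, hfact,
    PadicInt.valuation_pow] at hval
  rw [← Ideal.mem_span_singleton, PadicInt.mem_span_pow_iff_le_valuation _ hdpow]
  have hle := add_padicValNat_factorial_le h
  have : d ≤ d * x.valuation := Nat.le_mul_of_pos_right d hxval
  omega

lemma C_pow_dvd_derivative_trunc_exp_sub {s d : ℕ} (h : s * (p - 1) < d * (p - 2)) {a : ℤ_[p]}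
    (ha : a ∈ Ideal.span {(p : ℤ_[p])}) :
    Polynomial.C ((p : ℤ_[p]) ^ s) ∣
      Polynomial.derivative (((PadicInt.dividedPowers p).exp a).trunc (d + 1)) -
        Polynomial.C a * ((PadicInt.dividedPowers p).exp a).trunc (d + 1) := by
  rw [derivative_trunc_dividedPowers_exp _ ha, dvd_neg]
  exact (map_dvd Polynomial.C (p_pow_dvd_dpow h ha)).mul_right _

end TruncatedExponential

section Padic

variable {p : ℕ}

lemma mul_sub_one_lt_dTrunc_mul (hp : 2 < p) (s : ℕ) : s * (p - 1) < dTrunc p s * (p - 2) :=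
  Nat.lt_mul_of_div_lt (Nat.lt_succ_self _) (by omega)

lemma half_pow_sub_one_ne_zero (hp : 2 < p) {s : ℕ} (hs : s ≠ 0) : (p ^ s - 1) / 2 ≠ 0 := by
  have hps : 2 < p ^ s := hp.trans_le (Nat.le_self_pow hs p)
  omega

variable [Fact p.Prime]

lemma natCast_pow_dvd_natCast_mul_pow_sub_one_add_one (s : ℕ) {l : ℕ} (hl : 0 < l) :
    (p : ℤ_[p]) ^ s ∣ ((l * p ^ s - 1 : ℕ) : ℤ_[p]) + 1 := by
  have hpos : 1 ≤ l * p ^ s := Nat.mul_pos hl (pow_pos (Fact.out : p.Prime).pos s)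
  rw [← Nat.cast_add_one, Nat.sub_add_cancel hpos]
  simp

lemma exists_coe_eq_inv_two_and_pow_dvd_add (hp : Odd p) (s : ℕ) :
    ∃ κ : ℤ_[p], (κ : ℚ_[p]) = 2⁻¹ ∧ (p : ℤ_[p]) ^ s ∣ κ + ((p ^ s - 1) / 2 : ℕ) := by
  have hunit : IsUnit (2 : ℤ_[p]) := by
    rw [PadicInt.isUnit_iff]
    exact_mod_cast PadicInt.norm_natCast_eq_one_iff.2 (Nat.coprime_two_right.2 hp)
  obtain ⟨κ, hκ⟩ := hunit.exists_right_inv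
  obtain ⟨M, hM⟩ := hp.pow (n := s)
  have hpow : (p : ℤ_[p]) ^ s = 2 * M + 1 := by exact_mod_cast hM
  have hcoe : (2 : ℚ_[p]) * κ = 1 := by
    exact_mod_cast congrArg ((↑) : ℤ_[p] → ℚ_[p]) hκ
  refine ⟨κ, eq_inv_of_mul_eq_one_right hcoe, κ, ?_⟩
  rw [show (p ^ s - 1) / 2 = M by omega, hpow]
  linear_combination -(M : ℤ_[p]) * hκ

lemma norm_coeff_map_algebraMap_le_of_C_pow_dvd {σ : Type*} {f : MvPolynomial σ ℤ_[p]} {s : ℕ}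
    (h : C ((p : ℤ_[p]) ^ s) ∣ f) (mon : σ →₀ ℕ) :
    ‖coeff mon (MvPolynomial.map (algebraMap ℤ_[p] ℚ_[p]) f)‖ ≤ (p : ℝ) ^ (-(s : ℤ)) := by
  rw [coeff_map]
  exact (PadicInt.norm_le_pow_iff_mem_span_pow _ s).2
    (Ideal.mem_span_singleton.2 ((C_dvd_iff_dvd_coeff _ _).1 h mon))

lemma EsP_eq_map_trunc_exp (s g : ℕ) (lam : ℤ_[p]) :
    EsP p s g lam =
      ((((PadicInt.dividedPowers p).exp (p * lam)).trunc (dTrunc p s + 1)).map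
        (algebraMap ℤ_[p] ℚ_[p])).map C := by
  ext1 k
  rw [EsP, Polynomial.coeff_map, Polynomial.coeff_map, PowerSeries.coeff_trunc]
  simp only [Polynomial.finsetSum_coeff, Polynomial.coeff_C_mul_X_pow, Finset.sum_ite_eq,
    Finset.mem_range]
  split_ifs
  · rw [DividedPowers.exp, PowerSeries.coeff_mk, PadicInt.algebraMap_apply, coe_dpow_p_mul]
  · simp

lemma Isol_eq_hypergeometricSolution (s g : ℕ) (lam : ℤ_[p]) (l : ℕ) (i : Fin (2 * g + 1)) :
    Isol p s g lam l i =
      hypergeometricSolution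
        ((((PadicInt.dividedPowers p).exp (p * lam)).trunc (dTrunc p s + 1)).map
          (algebraMap ℤ_[p] ℚ_[p]))
        (fun _ ↦ (p ^ s - 1) / 2) (l * p ^ s - 1) i := by
  rw [Isol, PsiComp, EsP_eq_map_trunc_exp, mul_assoc, hypergeometricSolution,
    masterPolynomial_sub_single]

end Padic

theorem kz_equations_mod_ps_general {p : ℕ} [Fact p.Prime] {s : ℕ} {σ : Type*} [Fintype σ]
    [DecidableEq σ] {m : σ → ℕ} (hm : ∀ i, m i ≠ 0) {κ : σ → ℤ_[p]}
    (hκ : ∀ i, (p : ℤ_[p]) ^ s ∣ κ i + m i) {E : Polynomial ℤ_[p]} {a : ℤ_[p]}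
    (hE : Polynomial.C ((p : ℤ_[p]) ^ s) ∣ Polynomial.derivative E - Polynomial.C a * E)
    {n : ℕ} (hn : (p : ℤ_[p]) ^ s ∣ n + 1) {I : σ → MvPolynomial σ ℚ_[p]}
    (hI : ∀ i, I i = hypergeometricSolution (E.map (algebraMap ℤ_[p] ℚ_[p])) m n i) :
    (∀ i j : σ, i ≠ j → ∀ mon : σ →₀ ℕ,
      ‖coeff mon ((X i - X j) * pderiv i (I j) - C (κ i : ℚ_[p]) * (I i - I j))‖ ≤
        (p : ℝ) ^ (-(s : ℤ))) ∧
    (∀ i : σ, ∀ mon : σ →₀ ℕ,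
      ‖coeff mon ((∏ j ∈ Finset.univ.erase i, (X i - X j)) * pderiv i (I i) -
          (C (a : ℚ_[p]) * (∏ j ∈ Finset.univ.erase i, (X i - X j)) * I i -
            ∑ j ∈ Finset.univ.erase i, C (κ j : ℚ_[p]) *
              ((∏ k ∈ (Finset.univ.erase i).erase j, (X i - X k)) * (I i - I j))))‖ ≤
        (p : ℝ) ^ (-(s : ℤ))) := by
  simp only [hI, hypergeometricSolution_map]
  refine ⟨fun i j hij mon ↦ ?_, fun i mon ↦ ?_⟩
  · simpa [pderiv_map] using
      norm_coeff_map_algebraMap_le_of_C_pow_dvd (C_dvd_kz_pderiv_ne (E := E) hm hκ n hij) mon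
  · simpa [pderiv_map] using
      norm_coeff_map_algebraMap_le_of_C_pow_dvd (C_dvd_kz_pderiv_self hm hκ hE hn i) mon

/-- Let `λ ∈ ℤ_p` and `ℓ` a positive integer. Then `I^ℓ(z,λ)` satisfies the
KZ equations modulo `p^s`: for `i ≠ j`,
`(z_i−z_j)·(∂I^ℓ_j/∂z_i) ≡ (1/2)·(I^ℓ_i − I^ℓ_j) (mod p^s)`, and for each `i`,
`∏_{j≠i}(z_i−z_j)·(∂I^ℓ_i/∂z_i) ≡ pλ·∏_{j≠i}(z_i−z_j)·I^ℓ_i −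
(1/2)·Σ_{j≠i} ∏_{k≠i,j}(z_i−z_k)·(I^ℓ_i − I^ℓ_j) (mod p^s)`, where a congruence of
polynomials modulo `p^s` means every coefficient of the difference lies in `p^s ℤ_p`,
and `1/2` is the inverse of `2` in `ℤ_p`. -/
theorem kz_equations_mod_ps (p : ℕ) [Fact p.Prime] (hodd : Odd p)
    (s g : ℕ) (hs : 0 < s) (hg : 0 < g) (lam : ℤ_[p]) (l : ℕ) (hl : 0 < l) :
    (∀ i j : Fin (2 * g + 1), i ≠ j → ∀ mon : Fin (2 * g + 1) →₀ ℕ,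
      ‖coeff mon ((X i - X j) * pderiv i (Isol p s g lam l j) -
          C ((2 : ℚ_[p])⁻¹) * (Isol p s g lam l i - Isol p s g lam l j))‖ ≤
        (p : ℝ) ^ (-(s : ℤ))) ∧
    (∀ i : Fin (2 * g + 1), ∀ mon : Fin (2 * g + 1) →₀ ℕ,
      ‖coeff mon ((∏ j ∈ Finset.univ.erase i, (X i - X j)) * pderiv i (Isol p s g lam l i) -
          (C ((p : ℚ_[p]) * (lam : ℚ_[p])) * (∏ j ∈ Finset.univ.erase i, (X i - X j)) *
              Isol p s g lam l i -
            C ((2 : ℚ_[p])⁻¹) *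
              ∑ j ∈ Finset.univ.erase i,
                (∏ k ∈ (Finset.univ.erase i).erase j, (X i - X k)) *
                  (Isol p s g lam l i - Isol p s g lam l j)))‖ ≤
        (p : ℝ) ^ (-(s : ℤ))) := by
  obtain ⟨κ, hκ_half, hκ⟩ := exists_coe_eq_inv_two_and_pow_dvd_add hodd s
  have hp : 2 < p := (Fact.out : p.Prime).two_le.lt_of_ne' (hodd.ne_two_of_dvd_nat dvd_rfl)
  have hE := C_pow_dvd_derivative_trunc_exp_sub (mul_sub_one_lt_dTrunc_mul hp s)
    (Ideal.mul_mem_right lam _ (Ideal.mem_span_singleton_self (p : ℤ_[p])))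
  simpa only [hκ_half, ← Finset.mul_sum, PadicInt.coe_mul, PadicInt.coe_natCast] using
    kz_equations_mod_ps_general (fun _ ↦ half_pow_sub_one_ne_zero hp hs.ne') (fun _ ↦ hκ) hE
      (natCast_pow_dvd_natCast_mul_pow_sub_one_add_one s hl)
      (Isol_eq_hypergeometricSolution s g lam l)
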